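/- Fix integers k, m ≥ 1 and let e₁ = k/(k+m) − √(km(3k+3m−1))/((k+m)(3k+3m−1)) be the smaller extraneous fixed point and ξ = k/(k+m) the pole of C. Then C(x) < x for every x ∈ (0, e₁), and C(x) > x for every x ∈ (e₁, ξ). -/

import Mathlib

/-!
With `n = k + m` and `a = 3k + 3m - 1`, the displacement is `C x - x = -w x * E x`, where the
weight `w x = x (x - 1) / (2 (n x - k) ^ 3)` is positive for `0 < x < ξ`. Completing the square
gives `n E x = a (n x - k) ^ 2 - k m`, so the roots of `E` lie symmetrically about the pole
`ξ = k / n`, and left of the pole the sign of `E` changes exactly at the smaller root `e₁`.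
Finally `e₁ ≥ 0` because `k a - m = (3k - 1) n`, so that `(e₁, ξ)` lies within `(0, ξ)`.
-/

variable {k m x : ℝ}

/-- The quadratic `E` whose roots are the extraneous fixed points of Chebyshev's method for
`z ^ k * (z - 1) ^ m`. The multiplicities `k`, `m` are allowed to be real. -/
def extraneousQuadratic (k m x : ℝ) : ℝ :=
  (k + m) * (3 * k + 3 * m - 1) * x ^ 2 - 2 * k * (3 * k + 3 * m - 1) * x + (3 * k ^ 2 - k)

/-- Half the distance between the two extraneous fixed points, which are therefore
`k / (k + m) ± extraneousRadius k m`. -/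
noncomputable def extraneousRadius (k m : ℝ) : ℝ :=
  √(k * m * (3 * k + 3 * m - 1)) / ((k + m) * (3 * k + 3 * m - 1))

/-- Chebyshev's method for `z ^ k * (z - 1) ^ m` on the real line. At the pole `k / (k + m)` the
value is the junk value coming from division by zero. -/
noncomputable def chebyshevMap (k m x : ℝ) : ℝ :=
  x - x * (x - 1) * extraneousQuadratic k m x / (2 * ((k + m) * x - k) ^ 3)

lemma extraneousRadius_nonneg (hn : 0 ≤ k + m) (ha : 0 ≤ 3 * k + 3 * m - 1) :
    0 ≤ extraneousRadius k m :=
  div_nonneg (Real.sqrt_nonneg _) (mul_nonneg hn ha)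

lemma mul_sq_extraneousRadius (hn : k + m ≠ 0) (ha : 3 * k + 3 * m - 1 ≠ 0)
    (hs : 0 ≤ k * m * (3 * k + 3 * m - 1)) :
    (3 * k + 3 * m - 1) * ((k + m) * extraneousRadius k m) ^ 2 = k * m := by
  have hscale : (k + m) * extraneousRadius k m =
      √(k * m * (3 * k + 3 * m - 1)) / (3 * k + 3 * m - 1) := by
    rw [extraneousRadius, ← mul_div_assoc, mul_div_mul_left _ _ hn]
  rw [hscale, div_pow, Real.sq_sqrt hs, sq, mul_div_mul_right _ _ ha, mul_div_cancel₀ _ ha]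

lemma extraneousRadius_le (hk : 1 / 3 ≤ k) (hm : 0 < m) : extraneousRadius k m ≤ k / (k + m) := by
  have ha : 0 < 3 * k + 3 * m - 1 := by linarith
  have hma : m ≤ k * (3 * k + 3 * m - 1) := by
    have : 0 ≤ (3 * k - 1) * (k + m) := mul_nonneg (by linarith) (by linarith)
    linarith
  have hsqrt : √(k * m * (3 * k + 3 * m - 1)) ≤ k * (3 * k + 3 * m - 1) := by
    refine Real.sqrt_le_iff.mpr ⟨by positivity, ?_⟩
    calc k * m * (3 * k + 3 * m - 1)
        = k * (3 * k + 3 * m - 1) * m := by ring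
      _ ≤ k * (3 * k + 3 * m - 1) * (k * (3 * k + 3 * m - 1)) := by gcongr
      _ = (k * (3 * k + 3 * m - 1)) ^ 2 := (sq _).symm
  calc extraneousRadius k m
      ≤ k * (3 * k + 3 * m - 1) / ((k + m) * (3 * k + 3 * m - 1)) := by
        unfold extraneousRadius; gcongr
    _ = k / (k + m) := mul_div_mul_right _ _ ha.ne'

lemma add_mul_extraneousQuadratic : (k + m) * extraneousQuadratic k m x =
    (3 * k + 3 * m - 1) * ((k + m) * x - k) ^ 2 - k * m := by
  unfold extraneousQuadratic
  ring

lemma extraneousQuadratic_eq_mul (hn : k + m ≠ 0) (ha : 3 * k + 3 * m - 1 ≠ 0)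
    (hs : 0 ≤ k * m * (3 * k + 3 * m - 1)) :
    extraneousQuadratic k m x = (k + m) * (3 * k + 3 * m - 1) *
      ((x - (k / (k + m) - extraneousRadius k m)) *
        (x - (k / (k + m) + extraneousRadius k m))) := by
  have hpole : (k + m) * x - k = (k + m) * (x - k / (k + m)) := by
    rw [mul_sub, mul_div_cancel₀ _ hn]
  apply mul_left_cancel₀ hn
  rw [add_mul_extraneousQuadratic, hpole, ← mul_sq_extraneousRadius hn ha hs]
  ring

lemma extraneousQuadratic_pos (hk : 0 < k) (hm : 0 < m) (ha : 0 < 3 * k + 3 * m - 1)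
    (hx : x < k / (k + m) - extraneousRadius k m) : 0 < extraneousQuadratic k m x := by
  have hd := extraneousRadius_nonneg (add_pos hk hm).le ha.le
  rw [extraneousQuadratic_eq_mul (by positivity) ha.ne' (by positivity)]
  exact mul_pos (by positivity) (mul_pos_of_neg_of_neg (by linarith) (by linarith))

lemma extraneousQuadratic_neg (hk : 0 < k) (hm : 0 < m) (ha : 0 < 3 * k + 3 * m - 1)
    (hx : x ∈ Set.Ioo (k / (k + m) - extraneousRadius k m) (k / (k + m) + extraneousRadius k m)) :
    extraneousQuadratic k m x < 0 := by
  rw [extraneousQuadratic_eq_mul (by positivity) ha.ne' (by positivity)]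
  exact mul_neg_of_pos_of_neg (by positivity)
    (mul_neg_of_pos_of_neg (sub_pos.mpr hx.1) (sub_neg.mpr hx.2))

lemma chebyshevMap_eq_sub_mul : chebyshevMap k m x =
    x - x * (x - 1) / (2 * ((k + m) * x - k) ^ 3) * extraneousQuadratic k m x := by
  rw [chebyshevMap, mul_div_right_comm]

lemma chebyshev_weight_pos (hn : 0 < k + m) (hm : 0 ≤ m) (hx : x ∈ Set.Ioo 0 (k / (k + m))) :
    0 < x * (x - 1) / (2 * ((k + m) * x - k) ^ 3) := by
  have hpole : (k + m) * x - k < 0 := sub_neg.mpr ((lt_div_iff₀' hn).mp hx.2)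
  have hx1 : x < 1 := hx.2.trans_le ((div_le_one hn).mpr (le_add_of_nonneg_right hm))
  have hcube : ((k + m) * x - k) ^ 3 < 0 := Odd.pow_neg (by decide) hpole
  exact div_pos_of_neg_of_neg (mul_neg_of_pos_of_neg hx.1 (sub_neg.mpr hx1))
    (mul_neg_of_pos_of_neg two_pos hcube)

lemma chebyshevMap_lt_self_iff (hn : 0 < k + m) (hm : 0 ≤ m) (hx : x ∈ Set.Ioo 0 (k / (k + m))) :
    chebyshevMap k m x < x ↔ 0 < extraneousQuadratic k m x := by
  rw [chebyshevMap_eq_sub_mul, sub_lt_self_iff,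
    mul_pos_iff_of_pos_left (chebyshev_weight_pos hn hm hx)]

lemma self_lt_chebyshevMap_iff (hn : 0 < k + m) (hm : 0 ≤ m) (hx : x ∈ Set.Ioo 0 (k / (k + m))) :
    x < chebyshevMap k m x ↔ extraneousQuadratic k m x < 0 := by
  rw [chebyshevMap_eq_sub_mul, lt_sub_comm, sub_self, ← smul_eq_mul,
    smul_neg_iff_of_pos_left (chebyshev_weight_pos hn hm hx)]

theorem chebyshev_displacement_inside_general (hk : 1 / 3 ≤ k) (hm : 0 < m) {C : ℝ → ℝ}
    (hC : ∀ x, x ≠ k / (k + m) → C x = chebyshevMap k m x) :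
    (∀ x ∈ Set.Ioo 0 (k / (k + m) - extraneousRadius k m), C x < x) ∧
      (∀ x ∈ Set.Ioo (k / (k + m) - extraneousRadius k m) (k / (k + m)), x < C x) := by
  have hk₀ : 0 < k := by linarith
  have hn : 0 < k + m := add_pos hk₀ hm
  have ha : 0 < 3 * k + 3 * m - 1 := by linarith
  have hd₀ := extraneousRadius_nonneg hn.le ha.le
  have hd := extraneousRadius_le hk hm
  constructor
  · rintro x ⟨hx₀, hxe⟩
    have hxξ : x < k / (k + m) := by linarith
    rw [hC x hxξ.ne, chebyshevMap_lt_self_iff hn hm.le ⟨hx₀, hxξ⟩]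
    exact extraneousQuadratic_pos hk₀ hm ha hxe
  · rintro x ⟨hex, hxξ⟩
    rw [hC x hxξ.ne, self_lt_chebyshevMap_iff hn hm.le ⟨by linarith, hxξ⟩]
    exact extraneousQuadratic_neg hk₀ hm ha ⟨hex, by linarith⟩

/-- For `k, m ≥ 1`, with `e₁` the smaller extraneous fixed point and `ξ = k/(k+m)` the
pole of the Chebyshev map `C` for `z^k(z-1)^m`: `C(x) < x` on `(0, e₁)` and `C(x) > x` on
`(e₁, ξ)`. -/
theorem chebyshev_displacement_inside (k m : ℕ) (hk : 1 ≤ k) (hm : 1 ≤ m)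
    (C : ℝ → ℝ)
    (hC : ∀ x : ℝ, x ≠ (k : ℝ) / ((k : ℝ) + m) →
      C x = x - x * (x - 1) *
        (((k : ℝ) + m) * (3 * k + 3 * m - 1) * x ^ 2 - 2 * k * (3 * k + 3 * m - 1) * x
          + (3 * (k : ℝ) ^ 2 - k)) / (2 * (((k : ℝ) + m) * x - k) ^ 3))
    (e₁ : ℝ)
    (he₁ : e₁ = (k : ℝ) / ((k : ℝ) + m)
      - Real.sqrt ((k : ℝ) * m * (3 * k + 3 * m - 1)) / (((k : ℝ) + m) * (3 * k + 3 * m - 1)))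
    (ξ : ℝ) (hξ : ξ = (k : ℝ) / ((k : ℝ) + m)) :
    (∀ x : ℝ, x ∈ Set.Ioo (0 : ℝ) e₁ → C x < x) ∧
      (∀ x : ℝ, x ∈ Set.Ioo e₁ ξ → x < C x) := by
  have hk' : (1 : ℝ) ≤ k := by exact_mod_cast hk
  subst he₁ hξ
  exact chebyshev_displacement_inside_general (by linarith) (by exact_mod_cast hm) hC
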